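/- arXiv:2506.17143 — 3 statements merged into one kernel-verified Lean document; each statement's English description precedes it below -/
import Mathlib

section
/- Let A be a unital C*-algebra, D ∈ A self-adjoint, a ∈ A, and t ≥ 1. Define c(x) := √(1/2 − x·(1+x²)^{−1/2}/2) and s(x) := √(1/2 + x·(1+x²)^{−1/2}/2), and set c_t := cfc(fun x => c(x/t)) D and s_t := cfc(fun x => s(x/t)) D via the continuous functional calculus. Then ‖c_t·a − a·c_t‖ ≤ (1/2)·t⁻¹·‖D·a − a·D‖ and ‖s_t·a − a·s_t‖ ≤ (1/2)·t⁻¹·‖D·a − a·D‖. -/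
open MeasureTheory Complex

noncomputable def QQ (ρ x : ℝ) : ℂ := (1 + ρ ^ 4 : ℝ) + I * x * (1 - ρ ^ 4 : ℝ)

lemma QQ_norm (ρ x : ℝ) : 1 + ρ ^ 4 ≤ ‖QQ ρ x‖ := by
  have h := Complex.re_le_norm (QQ ρ x)
  have : (QQ ρ x).re = 1 + ρ ^ 4 := by
    simp [QQ, -Complex.ofReal_pow, ← Complex.ofReal_pow]
  linarith

lemma one_add_pos (ρ : ℝ) : 0 < 1 + ρ ^ 4 := by positivity

lemma QQ_ne (ρ x : ℝ) : QQ ρ x ≠ 0 := by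
  have h := QQ_norm ρ x
  have := one_add_pos ρ
  exact norm_pos_iff.1 (by linarith)

lemma QQ_cont : Continuous (fun p : ℝ × ℝ => QQ p.1 p.2) := by
  unfold QQ; fun_prop

lemma QQ_cont1 (x : ℝ) : Continuous (fun ρ => QQ ρ x) := by
  unfold QQ; fun_prop

lemma QQ_inv_norm (ρ x : ℝ) : ‖(QQ ρ x)⁻¹‖ ≤ (1 + ρ ^ 4)⁻¹ := by
  rw [norm_inv]
  exact inv_anti₀ (one_add_pos ρ) (QQ_norm ρ x)

lemma int_base : Integrable (fun ρ : ℝ => (1 + ρ ^ 4)⁻¹) := by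
  refine (integrable_inv_one_add_sq.const_mul 2).mono' ?_ ?_
  · exact (Continuous.inv₀ (by fun_prop) fun ρ => (one_add_pos ρ).ne').aestronglyMeasurable
  · refine .of_forall fun ρ => ?_
    rw [Real.norm_of_nonneg (by positivity), ← div_eq_mul_inv, inv_eq_one_div,
      div_le_div_iff₀ (by positivity) (by positivity)]
    nlinarith [sq_nonneg (ρ ^ 2 - 1), sq_nonneg (ρ ^ 2)]

lemma int_lin : Integrable (fun ρ : ℝ => |ρ| * (1 + ρ ^ 4)⁻¹) := by
  refine (integrable_inv_one_add_sq.const_mul 2).mono' ?_ ?_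
  · exact (Continuous.mul (by fun_prop) (Continuous.inv₀ (by fun_prop)
      fun ρ => (one_add_pos ρ).ne')).aestronglyMeasurable
  · refine .of_forall fun ρ => ?_
    rw [Real.norm_of_nonneg (by positivity), ← div_eq_mul_inv, ← div_eq_mul_inv,
      div_le_div_iff₀ (by positivity) (by positivity)]
    have : ρ ^ 2 = |ρ| ^ 2 := (sq_abs ρ).symm
    have h4 : ρ ^ 4 = |ρ| ^ 4 := by rw [show ρ ^ 4 = (ρ ^ 2) ^ 2 by ring, this]; ring
    rw [this, h4]
    generalize |ρ| = y
    nlinarith [sq_nonneg (y ^ 2 - y), sq_nonneg (y ^ 2), sq_nonneg (y - 1), sq_nonneg (y^2-1)]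

lemma int_sq_bound (ρ : ℝ) : ρ ^ 4 * ((1 + ρ ^ 4)⁻¹) ^ 2 ≤ (1 + ρ ^ 4)⁻¹ := by
  have := one_add_pos ρ
  have h : ρ ^ 4 * (1 + ρ ^ 4)⁻¹ ≤ 1 := by
    rw [← div_eq_mul_inv, div_le_one this]; linarith
  calc _ = (ρ ^ 4 * (1 + ρ ^ 4)⁻¹) * (1 + ρ ^ 4)⁻¹ := by ring
    _ ≤ 1 * (1 + ρ ^ 4)⁻¹ := by gcongr
    _ = _ := one_mul _

lemma int_sq : Integrable (fun ρ : ℝ => ρ ^ 4 * ((1 + ρ ^ 4)⁻¹) ^ 2) := by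
  refine int_base.mono' ?_ (.of_forall fun ρ => ?_)
  · exact (Continuous.mul (by fun_prop) ((Continuous.inv₀ (by fun_prop)
      fun ρ => (one_add_pos ρ).ne').pow 2)).aestronglyMeasurable
  · rw [Real.norm_of_nonneg (by positivity)]
    exact int_sq_bound ρ

lemma int_Qinv (x : ℝ) : Integrable (fun ρ : ℝ => (QQ ρ x)⁻¹) :=
  int_base.mono' ((QQ_cont1 x).inv₀ fun ρ => QQ_ne ρ x).aestronglyMeasurable
    (.of_forall fun ρ => QQ_inv_norm ρ x)

lemma Qsq_norm (ρ x : ℝ) : ‖(ρ : ℂ) ^ 4 * ((QQ ρ x)⁻¹) ^ 2‖ ≤ ρ ^ 4 * ((1 + ρ ^ 4)⁻¹) ^ 2 := by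
  rw [norm_mul, norm_pow, norm_pow]
  have : ‖(ρ : ℂ)‖ ^ 4 = ρ ^ 4 := by
    rw [Complex.norm_real, Real.norm_eq_abs]; exact Even.pow_abs (by decide) ρ
  rw [this]
  gcongr
  exact QQ_inv_norm ρ x

lemma int_Qsq (x : ℝ) : Integrable (fun ρ : ℝ => (ρ : ℂ) ^ 4 * ((QQ ρ x)⁻¹) ^ 2) :=
  int_sq.mono' (Continuous.mul (by fun_prop)
    (((QQ_cont1 x).inv₀ fun ρ => QQ_ne ρ x).pow 2)).aestronglyMeasurable
    (.of_forall fun ρ => Qsq_norm ρ x)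

/-- integration by parts -/
lemma parts (x : ℝ) : ∫ ρ : ℝ, (QQ ρ x)⁻¹ =
    4 * (1 - I * x) * ∫ ρ : ℝ, (ρ : ℂ) ^ 4 * ((QQ ρ x)⁻¹) ^ 2 := by
  have hd : ∀ ρ : ℝ, HasDerivAt (fun ρ : ℝ => (ρ : ℂ) * (QQ ρ x)⁻¹)
      ((QQ ρ x)⁻¹ - 4 * (1 - I * x) * ((ρ : ℂ) ^ 4 * ((QQ ρ x)⁻¹) ^ 2)) ρ := by
    intro ρ
    have h0 : HasDerivAt (fun ρ : ℝ => (ρ : ℂ)) 1 ρ := Complex.ofRealCLM.hasDerivAt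
    have h1 : HasDerivAt (fun ρ : ℝ => QQ ρ x) (4 * (ρ : ℂ) ^ 3 * (1 - I * x)) ρ := by
      have := ((h0.pow 4).const_add 1).add (((h0.pow 4).const_sub 1).const_mul (I * x))
      have e : (fun ρ : ℝ => QQ ρ x) =
          fun ρ : ℝ => (1 + (ρ : ℂ) ^ 4) + I * x * (1 - (ρ : ℂ) ^ 4) := by
        ext ρ; simp [QQ]
      rw [e]
      refine HasDerivAt.congr_deriv this ?_
      norm_num
      ring
    have h2 := h0.mul (h1.inv (QQ_ne ρ x))
    refine HasDerivAt.congr_deriv h2 ?_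
    have := QQ_ne ρ x
    simp only [Pi.inv_apply]
    field_simp
    ring
  have hi := (int_Qsq x).const_mul (4 * (1 - I * x))
  have hf : Integrable (fun ρ : ℝ => (ρ : ℂ) * (QQ ρ x)⁻¹) := by
    refine int_lin.mono' (Continuous.mul (by fun_prop)
      ((QQ_cont1 x).inv₀ fun ρ => QQ_ne ρ x)).aestronglyMeasurable (.of_forall fun ρ => ?_)
    rw [norm_mul, Complex.norm_real, Real.norm_eq_abs]
    gcongr
    exact QQ_inv_norm ρ x
  have := integral_eq_zero_of_hasDerivAt_of_integrable hd ((int_Qinv x).sub hi) hf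
  rw [integral_sub (int_Qinv x) hi, integral_const_mul] at this
  exact sub_eq_zero.1 this

noncomputable def JJ : ℝ := ∫ ρ : ℝ, (1 + ρ ^ 4)⁻¹

lemma QQ_zero (ρ : ℝ) : QQ ρ 0 = ((1 + ρ ^ 4 : ℝ) : ℂ) := by simp [QQ]

lemma JJ_eq : ∫ ρ : ℝ, (QQ ρ 0)⁻¹ = (JJ : ℂ) := by
  simp_rw [QQ_zero, ← Complex.ofReal_inv]
  exact integral_ofReal

lemma JJ_sq : ∫ ρ : ℝ, ρ ^ 4 * ((1 + ρ ^ 4)⁻¹) ^ 2 = JJ / 4 := by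
  have h := parts 0
  rw [JJ_eq] at h
  simp_rw [QQ_zero, ← Complex.ofReal_inv, ← Complex.ofReal_pow, ← Complex.ofReal_mul] at h
  rw [integral_complex_ofReal] at h
  simp only [ofReal_zero, mul_zero, sub_zero, mul_one] at h
  have : JJ = 4 * ∫ ρ : ℝ, ρ ^ 4 * ((1 + ρ ^ 4)⁻¹) ^ 2 := by exact_mod_cast h
  linarith

lemma JJ_pos : 0 < JJ := by
  unfold JJ
  rw [integral_pos_iff_support_of_nonneg (fun ρ => by positivity) int_base]
  have : Function.support (fun ρ : ℝ => (1 + ρ ^ 4)⁻¹) = Set.univ := by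
    ext ρ; simpa using (one_add_pos ρ).ne'
  rw [this]; simp

noncomputable def KK (ρ x : ℝ) : ℂ := (1 + I * x) * (QQ ρ x)⁻¹

lemma KK_deriv (ρ x : ℝ) : HasDerivAt (fun x => KK ρ x)
    (2 * I * ((ρ : ℂ) ^ 4 * ((QQ ρ x)⁻¹) ^ 2)) x := by
  have h0 : HasDerivAt (fun ρ : ℝ => (ρ : ℂ)) 1 x := Complex.ofRealCLM.hasDerivAt
  have h1 : HasDerivAt (fun x : ℝ => QQ ρ x) (I * (1 - ρ ^ 4 : ℝ)) x := by
    have := ((h0.const_mul I).mul_const ((1 - ρ ^ 4 : ℝ) : ℂ)).const_add ((1 + ρ ^ 4 : ℝ) : ℂ)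
    refine HasDerivAt.congr_deriv this ?_
    ring
  have h2 := ((h0.const_mul I).const_add 1).mul (h1.inv (QQ_ne ρ x))
  refine HasDerivAt.congr_deriv h2 ?_
  have h3 := QQ_ne ρ x
  simp only [Pi.inv_apply]
  field_simp
  simp only [QQ]
  push_cast
  ring

lemma HH_deriv (x : ℝ) : HasDerivAt (fun x => ∫ ρ : ℝ, KK ρ x)
    ((I / 2 * (1 / (1 + x ^ 2 : ℝ))) * ∫ ρ : ℝ, KK ρ x) x := by
  have h := (hasDerivAt_integral_of_dominated_loc_of_deriv_le (μ := volume)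
    (F := fun x ρ => KK ρ x) (F' := fun x ρ => 2 * I * ((ρ : ℂ) ^ 4 * ((QQ ρ x)⁻¹) ^ 2))
    (bound := fun ρ => 2 * (ρ ^ 4 * ((1 + ρ ^ 4)⁻¹) ^ 2)) (x₀ := x) (s := Set.univ) Filter.univ_mem
    (.of_forall fun x => ((int_Qinv x).const_mul _).aestronglyMeasurable)
    ((int_Qinv x).const_mul _) ((int_Qsq x).const_mul _).aestronglyMeasurable
    (.of_forall fun ρ x _ => ?_) (int_sq.const_mul 2)
    (.of_forall fun ρ x _ => KK_deriv ρ x)).2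
  · refine HasDerivAt.congr_deriv h ?_
    symm
    unfold KK
    rw [integral_const_mul, integral_const_mul, parts x]
    have : ((1 + x ^ 2 : ℝ) : ℂ) = (1 + I * x) * (1 - I * x) := by
      push_cast; ring_nf; simp
    have h1 : ((1 + x ^ 2 : ℝ) : ℂ) ≠ 0 := by
      have : 0 < 1 + x ^ 2 := by positivity
      exact_mod_cast this.ne'
    generalize ∫ ρ : ℝ, (ρ : ℂ) ^ 4 * ((QQ ρ x)⁻¹) ^ 2 = y
    calc _ = I / 2 * (1 / ((1 + x ^ 2 : ℝ) : ℂ)) * (4 * (((1 + I * x) * (1 - I * x))) * y) := by ring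
      _ = _ := by
        rw [← this]; field_simp; ring
  · rw [norm_mul]
    have : ‖(2 * I : ℂ)‖ = 2 := by simp
    rw [this]
    gcongr
    exact Qsq_norm ρ x

noncomputable def GG (x : ℝ) : ℂ := Complex.exp (I * ((Real.arctan x / 2 : ℝ) : ℂ))

lemma HH_eq (x : ℝ) : ∫ ρ : ℝ, KK ρ x = JJ * GG x := by
  have hE : ∀ x : ℝ, HasDerivAt (fun x : ℝ => Complex.exp (-(I * ((Real.arctan x / 2 : ℝ) : ℂ))))
      (Complex.exp (-(I * ((Real.arctan x / 2 : ℝ) : ℂ))) * (-(I * ((1 / (1 + x ^ 2) / 2 : ℝ) : ℂ)))) x :=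
    fun x => (((Real.hasDerivAt_arctan x).div_const 2).ofReal_comp.const_mul I).neg.cexp
  have hP : ∀ x : ℝ, HasDerivAt (fun x : ℝ => (∫ ρ : ℝ, KK ρ x) *
      Complex.exp (-(I * ((Real.arctan x / 2 : ℝ) : ℂ)))) 0 x := by
    intro x
    refine HasDerivAt.congr_deriv ((HH_deriv x).mul (hE x)) ?_
    push_cast; ring
  have hc := is_const_of_deriv_eq_zero (fun x => (hP x).differentiableAt) (fun x => (hP x).deriv) x 0
  have h0 : ∫ ρ : ℝ, KK ρ 0 = JJ := by
    rw [← JJ_eq]; simp [KK]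
  simp only [h0] at hc
  rw [Complex.exp_neg, mul_inv_eq_iff_eq_mul₀ (Complex.exp_ne_zero _)] at hc
  rw [hc]; simp [GG]

lemma s_eq (x : ℝ) : Real.sqrt (1 / 2 + x * (1 + x ^ 2) ^ (-(1 : ℝ) / 2) / 2) =
    Real.sin (Real.pi / 4 + Real.arctan x / 2) := by
  have h1 := Real.arctan_lt_pi_div_two x
  have h2 := Real.neg_pi_div_two_lt_arctan x
  have hp : x * (1 + x ^ 2) ^ (-(1 : ℝ) / 2) = Real.sin (Real.arctan x) := by
    rw [Real.sin_arctan, neg_div, Real.rpow_neg (by positivity), ← Real.sqrt_eq_rpow]; rfl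
  rw [hp, Real.sqrt_eq_iff_mul_self_eq_of_pos]
  · have h := Real.cos_two_mul' (Real.pi / 4 + Real.arctan x / 2)
    rw [show 2 * (Real.pi / 4 + Real.arctan x / 2) = Real.arctan x + Real.pi / 2 by ring,
      Real.cos_add_pi_div_two, Real.cos_sq'] at h
    nlinarith
  · apply Real.sin_pos_of_pos_of_lt_pi <;> linarith

lemma c_eq (x : ℝ) : Real.sqrt (1 / 2 - x * (1 + x ^ 2) ^ (-(1 : ℝ) / 2) / 2) =
    Real.cos (Real.pi / 4 + Real.arctan x / 2) := by
  have h := s_eq (-x)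
  rw [Real.arctan_neg] at h
  rw [← Real.sin_pi_div_two_sub,
    show Real.pi / 2 - (Real.pi / 4 + Real.arctan x / 2) = Real.pi / 4 + -Real.arctan x / 2 by ring, ← h]
  congr 1
  rw [neg_sq]; ring

section
variable {A : Type*} [CStarAlgebra A]

lemma re_of_spec {D : A} (hD : IsSelfAdjoint D) {z : ℂ} (hz : z ∈ spectrum ℂ D) : (z.re : ℂ) = z :=
  (hD.mem_spectrum_eq_re hz).symm

lemma KK_comm (D a : A) (hD : IsSelfAdjoint D) (ρ : ℝ) :
    ‖cfc (fun z : ℂ => KK ρ z.re) D * a - a * cfc (fun z : ℂ => KK ρ z.re) D‖ ≤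
      2 * (ρ ^ 4 * ((1 + ρ ^ 4)⁻¹) ^ 2) * ‖D * a - a * D‖ := by
  have hn : IsStarNormal D := hD.isStarNormal
  have hcQ : Continuous (fun z : ℂ => QQ ρ z.re) := by unfold QQ; fun_prop
  have hcQi : Continuous (fun z : ℂ => (QQ ρ z.re)⁻¹) := hcQ.inv₀ fun z => QQ_ne ρ _
  set R := cfc (fun z : ℂ => (QQ ρ z.re)⁻¹) D with hR
  set N : A := 1 + I • D with hN
  set Q : A := ((1 + ρ ^ 4 : ℝ) : ℂ) • (1 : A) + (I * (1 - ρ ^ 4 : ℝ)) • D with hQ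
  have eN : cfc (fun z : ℂ => 1 + I * (z.re : ℂ)) D = N := by
    have : cfc (fun z : ℂ => 1 + I * (z.re : ℂ)) D = cfc (fun z : ℂ => 1 + I * z) D :=
      cfc_congr fun z hz => by simp only [re_of_spec hD hz]
    rw [this, cfc_const_add (1 : ℂ) (fun z => I * z) D, cfc_const_mul_id I D, map_one]
  have eQ : cfc (fun z : ℂ => QQ ρ z.re) D = Q := by
    have : cfc (fun z : ℂ => QQ ρ z.re) D =
        cfc (fun z : ℂ => ((1 + ρ ^ 4 : ℝ) : ℂ) + (I * (1 - ρ ^ 4 : ℝ)) * z) D :=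
      cfc_congr fun z hz => by simp only [QQ, re_of_spec hD hz]; ring
    rw [this, cfc_const_add _ (fun z => (I * (1 - ρ ^ 4 : ℝ)) * z) D, cfc_const_mul_id _ D,
      Algebra.algebraMap_eq_smul_one]
  have hRQ : R * Q = 1 := by
    rw [hR, ← eQ, ← cfc_mul _ _ D hcQi.continuousOn hcQ.continuousOn]
    simp only [inv_mul_cancel₀ (QQ_ne ρ _)]
    exact cfc_const_one ℂ D
  have hQR : Q * R = 1 := by
    rw [hR, ← eQ, ← cfc_mul _ _ D hcQ.continuousOn hcQi.continuousOn]
    simp only [mul_inv_cancel₀ (QQ_ne ρ _)]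
    exact cfc_const_one ℂ D
  have hNR : cfc (fun z : ℂ => KK ρ z.re) D = N * R := by
    rw [hR, ← eN, ← cfc_mul _ _ D (by fun_prop) hcQi.continuousOn]; rfl
  have hRN : cfc (fun z : ℂ => KK ρ z.re) D = R * N := by
    rw [hR, ← eN, ← cfc_mul _ _ D hcQi.continuousOn (by fun_prop)]
    simp only [KK, mul_comm]
  have key : N * a * Q - Q * a * N = (2 * I * (ρ : ℂ) ^ 4) • (D * a - a * D) := by
    simp only [hN, hQ, add_mul, mul_add, smul_mul_assoc, mul_smul_comm, one_mul, mul_one, smul_add, smul_sub, smul_smul, mul_assoc]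
    push_cast
    module
  have key2 : cfc (fun z : ℂ => KK ρ z.re) D * a - a * cfc (fun z : ℂ => KK ρ z.re) D =
      (2 * I * (ρ : ℂ) ^ 4) • (R * (D * a - a * D) * R) := by
    rw [← smul_mul_assoc, ← mul_smul_comm, ← key]
    calc _ = R * N * a * (Q * R) - (R * Q) * a * (N * R) := by
          rw [hQR, hRQ, ← hRN, ← hNR]; simp
      _ = _ := by noncomm_ring
  have hRn : ‖R‖ ≤ (1 + ρ ^ 4)⁻¹ :=
    norm_cfc_le (by positivity) fun z _ => QQ_inv_norm ρ _
  rw [key2, norm_smul]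
  have e1 : ‖(2 * I * (ρ : ℂ) ^ 4)‖ = 2 * ρ ^ 4 := by
    have : ‖(ρ : ℂ)‖ ^ 4 = ρ ^ 4 := by
      rw [Complex.norm_real, Real.norm_eq_abs]; exact Even.pow_abs (by decide) ρ
    simp [norm_pow]
    simpa using this
  rw [e1]
  calc _ ≤ 2 * ρ ^ 4 * ((1 + ρ ^ 4)⁻¹ * ‖D * a - a * D‖ * (1 + ρ ^ 4)⁻¹) := by
        gcongr
        refine (norm_mul_le _ _).trans ?_
        gcongr
        refine (norm_mul_le _ _).trans ?_
        gcongr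
    _ = _ := by ring

lemma GG_cont : Continuous GG := by unfold GG; fun_prop

lemma KK_cont : Continuous (fun p : ℝ × ℝ => KK p.1 p.2) :=
  Continuous.mul (by fun_prop) (QQ_cont.inv₀ fun p => QQ_ne _ _)

lemma GG_comm (D a : A) (hD : IsSelfAdjoint D) :
    ‖cfc (fun z : ℂ => GG z.re) D * a - a * cfc (fun z : ℂ => GG z.re) D‖ ≤
      1 / 2 * ‖D * a - a * D‖ := by
  have hn : IsStarNormal D := hD.isStarNormal
  have hG : Continuous (fun z : ℂ => GG z.re) := GG_cont.comp Complex.continuous_re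
  set C : ℝ := 1 + ‖D‖ * ‖(1 : A)‖ with hC
  have hcont : Continuous (Function.uncurry fun (ρ : ℝ) (z : ℂ) => KK ρ z.re) :=
    KK_cont.comp (by fun_prop : Continuous fun p : ℝ × ℂ => (p.1, p.2.re))
  have hbd : ∀ ρ : ℝ, ∀ z ∈ spectrum ℂ D, ‖KK ρ z.re‖ ≤ C * (1 + ρ ^ 4)⁻¹ := by
    intro ρ z hz
    unfold KK
    rw [norm_mul]
    gcongr
    · rw [hC]
      refine (norm_add_le _ _).trans ?_
      rw [re_of_spec hD hz]
      have := spectrum.norm_le_norm_mul_of_mem hz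
      simpa using this
    · exact QQ_inv_norm _ _
  have hint : cfc (fun z : ℂ => ∫ ρ : ℝ, KK ρ z.re) D =
      ∫ ρ : ℝ, cfc (fun z : ℂ => KK ρ z.re) D :=
    cfc_integral (fun (ρ : ℝ) (z : ℂ) => KK ρ z.re) (fun ρ => C * (1 + ρ ^ 4)⁻¹) D
      hcont.continuousOn (.of_forall hbd) (int_base.const_mul C).2
  have hI : Integrable (fun ρ : ℝ => cfc (fun z : ℂ => KK ρ z.re) D) :=
    integrable_cfc (fun (ρ : ℝ) (z : ℂ) => KK ρ z.re) (fun ρ => C * (1 + ρ ^ 4)⁻¹) D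
      hcont.continuousOn (.of_forall hbd) (int_base.const_mul C).2
  simp only [HH_eq] at hint
  rw [cfc_const_mul _ _ D hG.continuousOn] at hint
  set T := cfc (fun z : ℂ => GG z.re) D
  have h1 : (JJ : ℂ) • (T * a - a * T) =
      ∫ ρ : ℝ, (cfc (fun z : ℂ => KK ρ z.re) D * a - a * cfc (fun z : ℂ => KK ρ z.re) D) := by
    rw [integral_sub (hI.mul_const a) (hI.const_mul a)]
    have e1 := ((ContinuousLinearMap.mul ℂ A).flip a).integral_comp_comm hI
    have e2 := ((ContinuousLinearMap.mul ℂ A) a).integral_comp_comm hI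
    simp only [ContinuousLinearMap.flip_apply, ContinuousLinearMap.mul_apply'] at e1 e2
    rw [e1, e2, ← hint, smul_sub, smul_mul_assoc, mul_smul_comm]
  have h2 : ‖(JJ : ℂ) • (T * a - a * T)‖ ≤
      ∫ ρ : ℝ, 2 * (ρ ^ 4 * ((1 + ρ ^ 4)⁻¹) ^ 2) * ‖D * a - a * D‖ := by
    rw [h1]
    exact norm_integral_le_of_norm_le ((int_sq.const_mul 2).mul_const _)
      (.of_forall fun ρ => KK_comm D a hD ρ)
  rw [integral_mul_const, integral_const_mul, JJ_sq, norm_smul, Complex.norm_real,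
    Real.norm_of_nonneg JJ_pos.le] at h2
  refine le_of_mul_le_mul_left (h2.trans_eq ?_) JJ_pos
  ring

lemma lin_comm (D a : A) (hD : IsSelfAdjoint D) (f : ℝ → ℝ) (w : ℂ) (hw : ‖w‖ ≤ 1)
    (hf : ∀ x, (f x : ℂ) = (w * GG x + star (w * GG x)) / 2) :
    ‖cfc f D * a - a * cfc f D‖ ≤ 1 / 2 * ‖D * a - a * D‖ := by
  have hn : IsStarNormal D := hD.isStarNormal
  have hG : Continuous (fun z : ℂ => GG z.re) := GG_cont.comp Complex.continuous_re
  set T := cfc (fun z : ℂ => GG z.re) D with hT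
  have e : cfc f D = (w / 2) • T + (star w / 2) • star T := by
    rw [cfc_real_eq_complex f hD, hT, ← cfc_star, ← cfc_const_mul _ _ D hG.continuousOn,
      ← cfc_const_mul _ (fun z : ℂ => star (GG z.re)) D (continuous_star.comp hG).continuousOn,
      ← cfc_add D (fun z : ℂ => w / 2 * GG z.re) (fun z : ℂ => star w / 2 * star (GG z.re))
        (continuous_const.mul hG).continuousOn
        (continuous_const.mul (continuous_star.comp hG)).continuousOn]
    congr 1
    ext z
    rw [hf, star_mul']; ring
  have b1 := GG_comm D a hD
  have b2 : ‖star T * a - a * star T‖ ≤ 1 / 2 * ‖D * a - a * D‖ := by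
    have h := GG_comm D (star a) hD
    rw [← norm_star, ← norm_star (D * star a - _)] at h
    simp only [star_sub, star_mul, star_star, hD.star_eq] at h
    rw [norm_sub_rev, norm_sub_rev (D * a)]
    exact h
  have e2 : cfc f D * a - a * cfc f D =
      (w / 2) • (T * a - a * T) + (star w / 2) • (star T * a - a * star T) := by
    rw [e]
    simp only [add_mul, mul_add, smul_mul_assoc, mul_smul_comm, smul_sub]
    abel
  rw [e2]
  refine (norm_add_le _ _).trans ?_
  rw [norm_smul, norm_smul, norm_div, norm_div, norm_star]
  simp only [Complex.norm_ofNat]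
  have p1 : ‖w‖ / 2 * ‖T * a - a * T‖ ≤ 1 / 2 * (1 / 2 * ‖D * a - a * D‖) := by gcongr
  have p2 : ‖w‖ / 2 * ‖star T * a - a * star T‖ ≤ 1 / 2 * (1 / 2 * ‖D * a - a * D‖) := by gcongr
  linarith

lemma scale_comm (D a : A) (hD : IsSelfAdjoint D) (t : ℝ) (ht : 1 ≤ t) (f : ℝ → ℝ)
    (hc : Continuous f) (w : ℂ) (hw : ‖w‖ ≤ 1)
    (hf : ∀ x, (f x : ℂ) = (w * GG x + star (w * GG x)) / 2) :
    ‖cfc (fun x => f (x / t)) D * a - a * cfc (fun x => f (x / t)) D‖ ≤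
      1 / 2 * t⁻¹ * ‖D * a - a * D‖ := by
  have e : cfc (fun x => f (x / t)) D = cfc f (t⁻¹ • D) := by
    rw [← cfc_comp_const_mul t⁻¹ f D hc.continuousOn hD]
    congr 1; ext x; rw [div_eq_inv_mul]
  have hD' : IsSelfAdjoint (t⁻¹ • D) := (IsSelfAdjoint.all t⁻¹).smul hD
  rw [e]
  refine (lin_comm (t⁻¹ • D) a hD' f w hw hf).trans_eq ?_
  rw [smul_mul_assoc, mul_smul_comm, ← smul_sub, norm_smul, Real.norm_of_nonneg (by positivity)]
  ring

lemma GG_cos (x : ℝ) : ((Real.cos (Real.pi / 4 + Real.arctan x / 2) : ℝ) : ℂ) =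
    (Complex.exp ((Real.pi / 4 : ℝ) * I) * GG x + star (Complex.exp ((Real.pi / 4 : ℝ) * I) * GG x)) / 2 := by
  have : Complex.exp ((Real.pi / 4 : ℝ) * I) * GG x =
      Complex.exp (((Real.pi / 4 + Real.arctan x / 2 : ℝ) : ℂ) * I) := by
    rw [GG, ← Complex.exp_add]; congr 1; push_cast; ring
  rw [this, ← Complex.exp_ofReal_mul_I_re]
  exact Complex.re_eq_add_conj _

lemma GG_sin (x : ℝ) : ((Real.sin (Real.pi / 4 + Real.arctan x / 2) : ℝ) : ℂ) =
    (Complex.exp ((-(Real.pi / 4) : ℝ) * I) * GG x + star (Complex.exp ((-(Real.pi / 4) : ℝ) * I) * GG x)) / 2 := by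
  have : Complex.exp ((-(Real.pi / 4) : ℝ) * I) * GG x =
      Complex.exp (((-(Real.pi / 4) + Real.arctan x / 2 : ℝ) : ℂ) * I) := by
    rw [GG, ← Complex.exp_add]; congr 1; push_cast; ring
  rw [this, ← Real.cos_sub_pi_div_two,
    show Real.pi / 4 + Real.arctan x / 2 - Real.pi / 2 = -(Real.pi / 4) + Real.arctan x / 2 by ring,
    ← Complex.exp_ofReal_mul_I_re]
  exact Complex.re_eq_add_conj _

end

/-- Let `D` be a self-adjoint element of a unital C*-algebra `A`, `a ∈ A`
and `t ≥ 1`.  With `c(x) := √(1/2 − x(1+x²)^{−1/2}/2)`, `s(x) := √(1/2 + x(1+x²)^{−1/2}/2)`,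
`c_t := c(·/t)(D)` and `s_t := s(·/t)(D)` given by the continuous functional calculus, one
has `‖[c_t, a]‖ ≤ (1/2) t⁻¹ ‖[D, a]‖` and `‖[s_t, a]‖ ≤ (1/2) t⁻¹ ‖[D, a]‖`. -/
theorem commutator_ct_st {A : Type*} [CStarAlgebra A] (D a : A) (hD : IsSelfAdjoint D)
    (t : ℝ) (ht : 1 ≤ t) :
    let c : ℝ → ℝ := fun x => Real.sqrt (1 / 2 - x * (1 + x ^ 2) ^ (-(1 : ℝ) / 2) / 2)
    let s : ℝ → ℝ := fun x => Real.sqrt (1 / 2 + x * (1 + x ^ 2) ^ (-(1 : ℝ) / 2) / 2)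
    let ct := cfc (fun x : ℝ => c (x / t)) D
    let st := cfc (fun x : ℝ => s (x / t)) D
    ‖ct * a - a * ct‖ ≤ 1 / 2 * t⁻¹ * ‖D * a - a * D‖ ∧
    ‖st * a - a * st‖ ≤ 1 / 2 * t⁻¹ * ‖D * a - a * D‖ := by

  intro c s ct st
  have hc : c = fun x => Real.cos (Real.pi / 4 + Real.arctan x / 2) := funext c_eq
  have hs : s = fun x => Real.sin (Real.pi / 4 + Real.arctan x / 2) := funext s_eq
  constructor
  · exact scale_comm D a hD t ht c (by rw [hc]; fun_prop) _
      (Complex.norm_exp_ofReal_mul_I (Real.pi / 4)).le (fun x => by rw [hc]; exact GG_cos x)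
  · exact scale_comm D a hD t ht s (by rw [hs]; fun_prop) _
      (Complex.norm_exp_ofReal_mul_I (-(Real.pi / 4))).le (fun x => by rw [hs]; exact GG_sin x)
end

section
/- Let A be a unital C*-algebra, D ∈ A self-adjoint, a ∈ A, t ≥ 1, and 0 < σ ≤ 1. Then ‖cfc(fun x => (1 + x²/t²)^{−σ}) D · a − a · cfc(fun x => (1 + x²/t²)^{−σ}) D‖ ≤ 2·t⁻¹·‖D·a − a·D‖. As a consequence, with c(x) := √(1/2 − x·(1+x²)^{−1/2}/2), s(x) := √(1/2 + x·(1+x²)^{−1/2}/2), c_t := cfc(fun x => c(x/t)) D, s_t := cfc(fun x => s(x/t)) D, one has ‖√(c_t s_t)·a − a·√(c_t s_t)‖ ≤ 2·t⁻¹·‖D·a − a·D‖, where √(c_t s_t) is the positive square root of c_t s_t. -/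
open Set MeasureTheory

/-- Commutator estimate for a resolvent `(α + β D²)⁻¹`. -/
lemma comm_resolvent_bound {A : Type*} [CStarAlgebra A]
    (D a : A) (hD : IsSelfAdjoint D) (α β M : ℝ) (hα : 0 < α) (hβ : 0 ≤ β)
    (hM : ∀ x : ℝ, β * |x| ≤ M * (α + β * x ^ 2)) :
    ‖cfc (fun x : ℝ => (α + β * x ^ 2)⁻¹) D * a - a * cfc (fun x : ℝ => (α + β * x ^ 2)⁻¹) D‖
      ≤ 2 * M * α⁻¹ * ‖D * a - a * D‖ := by
  have hpos : ∀ x : ℝ, 0 < α + β * x ^ 2 := fun x => by positivity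
  have hM0 : 0 ≤ M := by
    have := hM 0
    simp only [abs_zero, mul_zero] at this
    have h2 := hpos 0
    exact nonneg_of_mul_nonneg_left this h2
  have hfc : Continuous (fun x : ℝ => (α + β * x ^ 2)⁻¹) :=
    Continuous.inv₀ (by fun_prop) (fun x => (hpos x).ne')
  set R := cfc (fun x : ℝ => (α + β * x ^ 2)⁻¹) D with hR
  set Q := cfc (fun x : ℝ => α + β * x ^ 2) D with hQ
  set P := cfc (fun x : ℝ => β * x * (α + β * x ^ 2)⁻¹) D with hP
  have hQe : Q = algebraMap ℝ A α + β • (D * D) := by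
    rw [hQ, cfc_const_add .., cfc_const_mul .., cfc_pow_id .., sq]
  have hRQ : R * Q = 1 := by
    rw [hR, hQ, ← cfc_mul _ _ D (hfc.continuousOn) (by fun_prop), ← cfc_one ℝ D]
    exact cfc_congr fun x _ => inv_mul_cancel₀ (hpos x).ne'
  have hQR : Q * R = 1 := by
    rw [hR, hQ, ← cfc_mul _ _ D (by fun_prop) (hfc.continuousOn), ← cfc_one ℝ D]
    exact cfc_congr fun x _ => mul_inv_cancel₀ (hpos x).ne'
  have hDc : D = cfc (fun x : ℝ => x) D := (cfc_id' ℝ D).symm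
  have hRD : R * D = cfc (fun x : ℝ => (α + β * x ^ 2)⁻¹ * x) D := by
    rw [cfc_mul _ _ D (hfc.continuousOn) (by fun_prop), ← hDc]
  have hDR : D * R = cfc (fun x : ℝ => x * (α + β * x ^ 2)⁻¹) D := by
    rw [cfc_mul _ _ D (by fun_prop) (hfc.continuousOn), ← hDc]
  have hPR : β • (R * D) = P := by
    rw [hRD, ← cfc_const_mul β _ D (by fun_prop)]
    exact cfc_congr fun x _ => by ring
  have hPR' : β • (D * R) = P := by
    rw [hDR, ← cfc_const_mul β _ D (by fun_prop)]
    exact cfc_congr fun x _ => by ring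
  have hRn : ‖R‖ ≤ α⁻¹ := by
    refine norm_cfc_le (by positivity) fun x _ => ?_
    rw [Real.norm_of_nonneg (inv_nonneg.2 (hpos x).le)]
    exact inv_anti₀ hα (by nlinarith [mul_nonneg hβ (sq_nonneg x)])
  have hPn : ‖P‖ ≤ M := by
    refine norm_cfc_le hM0 fun x _ => ?_
    rw [norm_mul, norm_mul, Real.norm_of_nonneg (inv_nonneg.2 (hpos x).le),
      Real.norm_of_nonneg hβ, Real.norm_eq_abs, ← div_eq_mul_inv, div_le_iff₀ (hpos x)]
    exact hM x
  have key : R * a - a * R = -(P * (D * a - a * D) * R + R * (D * a - a * D) * P) := by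
    calc R * a - a * R = R * a * (Q * R) - (R * Q) * a * R := by rw [hRQ, hQR]; simp
      _ = R * (a * Q - Q * a) * R := by noncomm_ring
      _ = R * (-(β • (D * (D * a - a * D) + (D * a - a * D) * D))) * R := by
          rw [hQe, mul_add, add_mul, ← Algebra.commutes α a, mul_smul_comm, smul_mul_assoc,
            add_sub_add_left_eq_sub, ← smul_sub, ← smul_neg]
          congr 3
          noncomm_ring
      _ = _ := by
          rw [mul_neg, neg_mul, mul_smul_comm, smul_mul_assoc]
          rw [mul_add, add_mul, smul_add]
          conv_rhs => rw [← hPR]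
          congr 2
          · simp only [smul_mul_assoc, mul_assoc]
          · rw [hPR, ← hPR']; simp only [mul_smul_comm, mul_assoc]
  rw [key, norm_neg]
  set C := D * a - a * D
  have h1 : ‖P * C * R‖ ≤ M * ‖C‖ * α⁻¹ :=
    (norm_mul_le _ _).trans (mul_le_mul ((norm_mul_le _ _).trans (by gcongr)) hRn
      (norm_nonneg _) (by positivity))
  have h2 : ‖R * C * P‖ ≤ α⁻¹ * ‖C‖ * M :=
    (norm_mul_le _ _).trans (mul_le_mul ((norm_mul_le _ _).trans (by gcongr)) hPn
      (norm_nonneg _) (by positivity))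
  calc _ ≤ _ := norm_add_le _ _
    _ ≤ _ := add_le_add h1 h2
    _ = _ := by ring

/-- The first estimate. -/
lemma comm_rpow_bound {A : Type*} [CStarAlgebra A]
    (D a : A) (hD : IsSelfAdjoint D) (t : ℝ) (ht : 1 ≤ t)
    (σ : ℝ) (hσ : 0 < σ) (hσ' : σ ≤ 1) :
    ‖cfc (fun x : ℝ => (1 + x ^ 2 / t ^ 2) ^ (-σ)) D * a
      - a * cfc (fun x : ℝ => (1 + x ^ 2 / t ^ 2) ^ (-σ)) D‖ ≤ 2 * t⁻¹ * ‖D * a - a * D‖ := by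
  have ht0 : 0 < t := by linarith
  have ineq : ∀ τ : ℝ, 0 ≤ τ → ∀ α : ℝ, τ ≤ α → ∀ x : ℝ,
      τ / t ^ 2 * |x| ≤ t⁻¹ * (α + τ / t ^ 2 * x ^ 2) := by
    intro τ hτ α hα x
    have e1 : τ / t ^ 2 * |x| = t⁻¹ * (τ * (|x| / t)) := by field_simp
    have e2 : τ / t ^ 2 * x ^ 2 = τ * (|x| / t) ^ 2 := by rw [div_pow, sq_abs]; ring
    rw [e1, e2]
    gcongr
    nlinarith [mul_nonneg hτ (sq_nonneg (|x| / t - 1)), mul_nonneg hτ (sq_nonneg (|x| / t))]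
  rcases hσ'.eq_or_lt with rfl | hlt
  · have := comm_resolvent_bound D a hD 1 (1 / t ^ 2) t⁻¹ one_pos (by positivity)
      (ineq 1 zero_le_one 1 le_rfl)
    have e : (fun x : ℝ => (1 + x ^ 2 / t ^ 2) ^ (-1 : ℝ))
        = fun x : ℝ => (1 + 1 / t ^ 2 * x ^ 2)⁻¹ := by
      funext x
      rw [Real.rpow_neg_one]
      ring_nf
    rw [e]
    simpa using this
  have hp : σ ∈ Ioo (0 : ℝ) 1 := ⟨hσ, hlt⟩
  set I := ∫ τ in Ioi (0 : ℝ), Real.rpowIntegrand₀₁ σ τ 1 with hI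
  have hIpos : 0 < I := Real.integral_rpowIntegrand₀₁_one_pos hp
  let g : ℝ → ℝ → ℝ := fun τ x => τ ^ (σ - 1) * ((1 + τ) + τ / t ^ 2 * x ^ 2)⁻¹
  have hg : ∀ τ ∈ Ioi (0 : ℝ), ∀ x : ℝ,
      Real.rpowIntegrand₀₁ σ τ ((1 + x ^ 2 / t ^ 2)⁻¹) = g τ x := by
    intro τ hτ x
    have hτ' : 0 < τ := hτ
    have hx : 0 < 1 + x ^ 2 / t ^ 2 := by positivity
    rw [Real.rpowIntegrand₀₁_eq_pow_div hp hτ'.le (by positivity)]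
    simp only [g]
    rw [mul_div_assoc]
    congr 1
    have : 0 < τ + (1 + x ^ 2 / t ^ 2)⁻¹ := by positivity
    rw [div_eq_iff this.ne', inv_mul_eq_div, eq_div_iff (by positivity), inv_mul_eq_div,
      div_eq_iff hx.ne', add_mul, mul_comm (_⁻¹), ]
    field_simp
    ring
  have hg1 : ∀ τ ∈ Ioi (0 : ℝ), Real.rpowIntegrand₀₁ σ τ 1 = τ ^ (σ - 1) * (1 + τ)⁻¹ := by
    intro τ hτ
    have := hg τ hτ 0
    simpa [g] using this
  have hint1 : IntegrableOn (fun τ => Real.rpowIntegrand₀₁ σ τ 1) (Ioi 0) :=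
    Real.integrableOn_rpowIntegrand₀₁_Ioi hp zero_le_one
  have hfun : (fun x : ℝ => (1 + x ^ 2 / t ^ 2) ^ (-σ))
      = fun x : ℝ => I⁻¹ * ∫ τ in Ioi (0 : ℝ), g τ x := by
    funext x
    have hx : 0 < 1 + x ^ 2 / t ^ 2 := by positivity
    rw [Real.rpow_neg hx.le, ← Real.inv_rpow hx.le,
      Real.rpow_eq_const_mul_integral hp (inv_nonneg.2 hx.le)]
    congr 1
    exact setIntegral_congr_fun measurableSet_Ioi fun τ hτ => hg τ hτ x
  have hgcont : ContinuousOn (Function.uncurry g) (Ioi 0 ×ˢ spectrum ℝ D) := by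
    have : ∀ q ∈ Ioi (0 : ℝ) ×ˢ spectrum ℝ D, (1 + q.1) + q.1 / t ^ 2 * q.2 ^ 2 ≠ 0 := by
      rintro ⟨τ, x⟩ ⟨hτ, -⟩
      have hτ' : 0 < τ := hτ
      positivity
    refine ContinuousOn.mul (ContinuousOn.rpow_const (by fun_prop) ?_)
      (ContinuousOn.inv₀ (by fun_prop) this)
    rintro ⟨τ, x⟩ ⟨hτ, -⟩
    exact Or.inl (ne_of_gt hτ)
  have hbound : ∀ᵐ τ ∂(volume.restrict (Ioi (0 : ℝ))), ∀ z ∈ spectrum ℝ D,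
      ‖g τ z‖ ≤ Real.rpowIntegrand₀₁ σ τ 1 := by
    refine ae_restrict_of_forall_mem measurableSet_Ioi fun τ hτ z _ => ?_
    have hτ' : 0 < τ := hτ
    rw [hg1 τ hτ, Real.norm_of_nonneg (by positivity)]
    simp only [g]
    refine mul_le_mul_of_nonneg_left (inv_anti₀ (by positivity) ?_) (by positivity)
    have : 0 ≤ τ / t ^ 2 * z ^ 2 := by positivity
    linarith
  have hcfc : cfc (fun x : ℝ => ∫ τ in Ioi (0 : ℝ), g τ x) D = ∫ τ in Ioi (0 : ℝ), cfc (g τ) D :=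
    cfc_setIntegral measurableSet_Ioi g _ D hgcont hbound hint1.hasFiniteIntegral hD
  have hcint : IntegrableOn (fun τ => cfc (g τ) D) (Ioi 0) :=
    integrableOn_cfc measurableSet_Ioi g _ D hgcont hbound hint1.hasFiniteIntegral hD
  let L : A →L[ℝ] A := (ContinuousLinearMap.mul ℝ A).flip a - ContinuousLinearMap.mul ℝ A a
  have hL : ∀ y, L y = y * a - a * y := fun y => by simp [L]
  have hw : cfc (fun x : ℝ => (1 + x ^ 2 / t ^ 2) ^ (-σ)) D
      = I⁻¹ • ∫ τ in Ioi (0 : ℝ), cfc (g τ) D := by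
    have hsm : (fun x : ℝ => I⁻¹ * ∫ τ in Ioi (0 : ℝ), g τ x)
        = fun x : ℝ => I⁻¹ • ∫ τ in Ioi (0 : ℝ), g τ x := rfl
    have hwc : Continuous (fun x : ℝ => (1 + x ^ 2 / t ^ 2) ^ (-σ)) :=
      Continuous.rpow_const (by fun_prop) fun x => Or.inl (by positivity)
    have hc : Continuous (fun x : ℝ => ∫ τ in Ioi (0 : ℝ), g τ x) := by
      have : (fun x : ℝ => ∫ τ in Ioi (0 : ℝ), g τ x)
          = fun x => I * (1 + x ^ 2 / t ^ 2) ^ (-σ) := by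
        funext x
        rw [congrFun hfun x]
        field_simp
      rw [this]
      exact continuous_const.mul hwc
    rw [hfun, cfc_const_mul _ _ D hc.continuousOn, hcfc]
  rw [← hL, hw, map_smul, ← L.integral_comp_comm hcint, norm_smul,
    Real.norm_of_nonneg (by positivity)]
  have hest : ‖∫ τ in Ioi (0 : ℝ), L (cfc (g τ) D)‖
      ≤ ∫ τ in Ioi (0 : ℝ), (2 * t⁻¹ * ‖D * a - a * D‖) * Real.rpowIntegrand₀₁ σ τ 1 := by
    refine norm_integral_le_of_norm_le (hint1.const_mul _) ?_
    refine ae_restrict_of_forall_mem measurableSet_Ioi fun τ hτ => ?_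
    have hτ' : 0 < τ := hτ
    have hb := comm_resolvent_bound D a hD (1 + τ) (τ / t ^ 2) t⁻¹ (by positivity) (by positivity)
      (ineq τ hτ'.le (1 + τ) (by linarith))
    have hc : Continuous (fun x : ℝ => ((1 + τ) + τ / t ^ 2 * x ^ 2)⁻¹) :=
      Continuous.inv₀ (by fun_prop) (fun x => by positivity)
    have e : cfc (g τ) D
        = τ ^ (σ - 1) • cfc (fun x : ℝ => ((1 + τ) + τ / t ^ 2 * x ^ 2)⁻¹) D :=
      cfc_const_mul _ _ D hc.continuousOn
    rw [e, map_smul, norm_smul, hL, Real.norm_of_nonneg (by positivity), hg1 τ hτ]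
    calc _ ≤ _ := mul_le_mul_of_nonneg_left hb (by positivity)
      _ = _ := by ring
  rw [integral_const_mul, ← hI] at hest
  calc _ ≤ _ := mul_le_mul_of_nonneg_left hest (by positivity)
    _ = _ := by field_simp

/-- Let `D` be a self-adjoint element of a unital C*-algebra `A`, `a ∈ A`,
`t ≥ 1` and `0 < σ ≤ 1`.  Then `‖[(1 + D²/t²)^{−σ}, a]‖ ≤ 2 t⁻¹ ‖[D, a]‖`.  As a
consequence, with `c_t := c(·/t)(D)`, `s_t := s(·/t)(D)` as in the construction of the
quasi-projection representative, the positive square root `r` of `c_t s_t` (characterized by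
`0 ≤ r` and `r² = c_t s_t`) satisfies `‖[r, a]‖ ≤ 2 t⁻¹ ‖[D, a]‖`. -/
theorem commutator_sqrt_ctst {A : Type*} [CStarAlgebra A] [PartialOrder A]
    [StarOrderedRing A] (D a : A) (hD : IsSelfAdjoint D) (t : ℝ) (ht : 1 ≤ t)
    (σ : ℝ) (hσ : 0 < σ) (hσ' : σ ≤ 1) :
    let w := cfc (fun x : ℝ => (1 + x ^ 2 / t ^ 2) ^ (-σ)) D
    let c : ℝ → ℝ := fun x => Real.sqrt (1 / 2 - x * (1 + x ^ 2) ^ (-(1 : ℝ) / 2) / 2)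
    let s : ℝ → ℝ := fun x => Real.sqrt (1 / 2 + x * (1 + x ^ 2) ^ (-(1 : ℝ) / 2) / 2)
    let ct := cfc (fun x : ℝ => c (x / t)) D
    let st := cfc (fun x : ℝ => s (x / t)) D
    ‖w * a - a * w‖ ≤ 2 * t⁻¹ * ‖D * a - a * D‖ ∧
    ∀ r : A, 0 ≤ r → r ^ 2 = ct * st →
      ‖r * a - a * r‖ ≤ 2 * t⁻¹ * ‖D * a - a * D‖ := by
  have ht0 : 0 < t := by linarith
  intro w c s ct st
  refine ⟨comm_rpow_bound D a hD t ht σ hσ hσ', fun r hr hr2 => ?_⟩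
  have hcc : Continuous c := by
    refine Real.continuous_sqrt.comp (continuous_const.sub ((continuous_id.mul
      (Continuous.rpow_const (by fun_prop) fun x => Or.inl ?_)).div_const 2))
    positivity
  have hsc : Continuous s := by
    refine Real.continuous_sqrt.comp (continuous_const.add ((continuous_id.mul
      (Continuous.rpow_const (by fun_prop) fun x => Or.inl ?_)).div_const 2))
    positivity
  have hvc : Continuous (fun x : ℝ => (1 + x ^ 2 / t ^ 2) ^ (-(1 / 4) : ℝ)) :=
    Continuous.rpow_const (by fun_prop) fun x => Or.inl (by positivity)
  set v := cfc (fun x : ℝ => (1 + x ^ 2 / t ^ 2) ^ (-(1 / 4) : ℝ)) D with hv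
  have hcs : ∀ y : ℝ, c y * s y = 1 / 2 * (1 + y ^ 2) ^ (-(1 / 2) : ℝ) := by
    intro y
    have hy : 0 < 1 + y ^ 2 := by positivity
    have hq : (1 + y ^ 2) ^ (-(1 : ℝ) / 2) = (Real.sqrt (1 + y ^ 2))⁻¹ := by
      rw [neg_div, Real.rpow_neg hy.le, Real.sqrt_eq_rpow]
    have hq' : (1 + y ^ 2) ^ (-(1 / 2) : ℝ) = (Real.sqrt (1 + y ^ 2))⁻¹ := by
      rw [Real.rpow_neg hy.le, Real.sqrt_eq_rpow]
    simp only [c, s]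
    rw [hq, hq']
    set u := Real.sqrt (1 + y ^ 2) with hu
    have hu0 : 0 < u := Real.sqrt_pos.2 hy
    have hu2 : u ^ 2 = 1 + y ^ 2 := Real.sq_sqrt hy.le
    have hyu : |y * u⁻¹| ≤ 1 := by
      rw [abs_mul, abs_of_pos (inv_pos.2 hu0), ← div_eq_mul_inv, div_le_one hu0]
      exact abs_le_of_sq_le_sq (by linarith) hu0.le
    have h2 := abs_le.1 hyu
    rw [← Real.sqrt_mul (by linarith)]
    rw [Real.sqrt_eq_iff_mul_self_eq_of_pos (by positivity)]
    field_simp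
    nlinarith
  have hkey : ∀ x : ℝ, c (x / t) * s (x / t)
      = (Real.sqrt (1 / 2) * (1 + x ^ 2 / t ^ 2) ^ (-(1 / 4) : ℝ)) *
        (Real.sqrt (1 / 2) * (1 + x ^ 2 / t ^ 2) ^ (-(1 / 4) : ℝ)) := by
    intro x
    have hx : 0 < 1 + x ^ 2 / t ^ 2 := by positivity
    rw [hcs, div_pow, mul_mul_mul_comm, Real.mul_self_sqrt (by norm_num), ← Real.rpow_add hx]
    norm_num
  have hvc2 : Continuous
      (fun x : ℝ => Real.sqrt (1 / 2) * (1 + x ^ 2 / t ^ 2) ^ (-(1 / 4) : ℝ)) :=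
    continuous_const.mul hvc
  have hct : Continuous (fun x : ℝ => c (x / t)) := hcc.comp (by fun_prop)
  have hst : Continuous (fun x : ℝ => s (x / t)) := hsc.comp (by fun_prop)
  have hsv : Real.sqrt (1 / 2) • v
      = cfc (fun x : ℝ => Real.sqrt (1 / 2) * (1 + x ^ 2 / t ^ 2) ^ (-(1 / 4) : ℝ)) D :=
    (cfc_const_mul _ _ D hvc.continuousOn).symm
  have hv0 : 0 ≤ Real.sqrt (1 / 2) • v := by
    rw [hsv]
    exact cfc_nonneg fun x _ => by positivity
  have hvv : (Real.sqrt (1 / 2) • v) * (Real.sqrt (1 / 2) • v) = ct * st := by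
    rw [hsv]
    simp only [ct, st]
    rw [← cfc_mul _ _ D hvc2.continuousOn hvc2.continuousOn,
      ← cfc_mul _ _ D hct.continuousOn hst.continuousOn]
    exact cfc_congr fun x _ => (hkey x).symm
  have hrv : r = Real.sqrt (1 / 2) • v := by
    rw [← CFC.mul_self_eq_mul_self_iff r _ hr hv0, hvv, ← hr2, sq]
  have hb := comm_rpow_bound D a hD t ht (1 / 4) (by norm_num) (by norm_num)
  rw [← hv] at hb
  rw [hrv, smul_mul_assoc, mul_smul_comm, ← smul_sub, norm_smul,
    Real.norm_of_nonneg (Real.sqrt_nonneg _)]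
  have h1 : Real.sqrt (1 / 2) ≤ 1 := Real.sqrt_le_one.2 (by norm_num)
  calc _ ≤ 1 * ‖v * a - a * v‖ := by gcongr
    _ ≤ _ := by rw [one_mul]; exact hb
end

section
/- Let A be a unital C*-algebra, D ∈ A self-adjoint, a ∈ A, t ≥ 1, and 0 ≤ σ < 1. Set F_t := cfc(fun x => (x/t)·(1 + x²/t²)^{−1/2}) D and |D|^σ := cfc(fun x => |x|^σ) D. Then ‖|D|^σ · (F_t·a − a·F_t)‖ ≤ C_σ · t^{σ−1} · ‖D·a − a·D‖, where C_σ := 1 + 2√π·Γ((1−σ)/2)/Γ((2−σ)/2) and Γ is the Gamma function. In particular, for σ = 0 one obtains ‖F_t·a − a·F_t‖ ≤ (1 + 2π)·t⁻¹·‖D·a − a·D‖. -/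
open Real


lemma aux_pt (m : ℝ) (hm : 0 < m) (r : ℝ) (hr : 0 ≤ r) (hr2 : r ≤ 2) (x : ℝ) :
    |x| ^ r * (m + x ^ 2)⁻¹ ≤ m ^ (r / 2 - 1) := by
  have hpos : 0 < m + x ^ 2 := by positivity
  have h1 : |x| ^ r ≤ (m + x ^ 2) ^ (r / 2) := by
    have : |x| ^ r = (x ^ 2) ^ (r / 2) := by
      rw [← sq_abs, ← Real.rpow_natCast, ← Real.rpow_mul (abs_nonneg x)]
      congr 1; push_cast; ring
    rw [this]
    exact Real.rpow_le_rpow (by positivity) (by linarith) (by linarith)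
  calc |x| ^ r * (m + x ^ 2)⁻¹ ≤ (m + x ^ 2) ^ (r / 2) * (m + x ^ 2)⁻¹ := by gcongr
    _ = (m + x ^ 2) ^ (r / 2 - 1) := by
      rw [Real.rpow_sub hpos, Real.rpow_one, ← div_eq_mul_inv ((m + x ^ 2) ^ (r / 2))]
    _ ≤ m ^ (r / 2 - 1) :=
      Real.rpow_le_rpow_of_nonpos hm (by nlinarith [sq_nonneg x]) (by linarith)

lemma aux_key {A : Type*} [CStarAlgebra A] (D a : A) (hD : IsSelfAdjoint D)
    (σ : ℝ) (hσ : 0 ≤ σ) (hσ' : σ < 1) (m : ℝ) (hm : 0 < m) :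
    ‖cfc (fun x : ℝ => |x| ^ σ) D * (cfc (fun x : ℝ => x * (m + x ^ 2)⁻¹) D * a
      - a * cfc (fun x : ℝ => x * (m + x ^ 2)⁻¹) D)‖ ≤
      2 * m ^ (σ / 2 - 1) * ‖D * a - a * D‖ := by
  have hne : ∀ x : ℝ, m + x ^ 2 ≠ 0 := fun x => by positivity
  have cR : Continuous (fun x : ℝ => (m + x ^ 2)⁻¹) := by fun_prop (disch := assumption)
  have cG : Continuous (fun x : ℝ => x * (m + x ^ 2)⁻¹) := by fun_prop (disch := assumption)
  have cB : Continuous (fun x : ℝ => |x| ^ σ) :=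
    continuous_abs.rpow_const (fun _ => Or.inr hσ)
  set B := cfc (fun x : ℝ => |x| ^ σ) D with hB
  set G := cfc (fun x : ℝ => x * (m + x ^ 2)⁻¹) D with hG
  set R := cfc (fun x : ℝ => (m + x ^ 2)⁻¹) D with hR
  set X := cfc (fun x : ℝ => m + x ^ 2) D with hX
  have eX : X = algebraMap ℝ A m + D ^ 2 := by
    rw [hX, cfc_const_add m (fun x : ℝ => x ^ 2) D, cfc_pow_id (R := ℝ) D 2]
  have eXR : X * R = 1 := by
    rw [hX, hR, ← cfc_mul _ _ D (by fun_prop) cR.continuousOn, ← cfc_one ℝ D]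
    exact cfc_congr (fun x _ => mul_inv_cancel₀ (hne x))
  have eRX : R * X = 1 := by
    rw [hX, hR, ← cfc_mul _ _ D cR.continuousOn (by fun_prop), ← cfc_one ℝ D]
    exact cfc_congr (fun x _ => inv_mul_cancel₀ (hne x))
  have eDR : G = D * R := by
    rw [hG, cfc_mul _ _ D (by fun_prop) cR.continuousOn, cfc_id' ℝ D]
  have eRD : G = R * D := by
    have h := (cfc_commute_cfc (fun x : ℝ => x) (fun x : ℝ => (m + x ^ 2)⁻¹) D).eq
    rw [cfc_id' ℝ D] at h
    rw [eDR, hR, h]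
  have nR : ‖R‖ ≤ m⁻¹ := by
    refine norm_cfc_le (by positivity) fun x _ => ?_
    have := aux_pt m hm 0 le_rfl (by norm_num) x
    rw [Real.norm_of_nonneg (by positivity)]
    simpa [Real.rpow_neg_one] using this
  have nG : ‖G‖ ≤ m ^ (-(1 / 2) : ℝ) := by
    refine norm_cfc_le (by positivity) fun x _ => ?_
    have := aux_pt m hm 1 (by norm_num) (by norm_num) x
    rw [norm_mul, Real.norm_eq_abs, Real.norm_of_nonneg (by positivity)]
    norm_num at this ⊢
    exact this
  have nBR : ‖B * R‖ ≤ m ^ (σ / 2 - 1) := by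
    rw [hB, hR, ← cfc_mul _ _ D cB.continuousOn cR.continuousOn]
    refine norm_cfc_le (by positivity) fun x _ => ?_
    rw [Real.norm_of_nonneg (by positivity)]
    exact aux_pt m hm σ hσ (by linarith) x
  have nBG : ‖B * G‖ ≤ m ^ ((σ + 1) / 2 - 1) := by
    rw [hB, hG, ← cfc_mul _ _ D cB.continuousOn cG.continuousOn]
    refine norm_cfc_le (by positivity) fun x _ => ?_
    have := aux_pt m hm (σ + 1) (by linarith) (by linarith) x
    rw [norm_mul, norm_mul, Real.norm_eq_abs x, Real.norm_of_nonneg (r := |x| ^ σ) (by positivity),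
      Real.norm_of_nonneg (r := (m + x ^ 2)⁻¹) (by positivity), ← mul_assoc]
    rwa [Real.rpow_add_one' (abs_nonneg x) (by linarith)] at this
  have eM : ∀ z : A, algebraMap ℝ A m * z = z * algebraMap ℝ A m := fun z => Algebra.commutes m z
  have ident : G * a - a * G = m • (R * (D * a - a * D) * R) - G * (D * a - a * D) * G := by
    have h1 : m • (R * (D * a - a * D) * R) = R * (algebraMap ℝ A m * (D * a - a * D)) * R := by
      rw [Algebra.smul_def, ← mul_assoc R, ← eM R]; simp only [mul_assoc]
    have h2 : G * (D * a - a * D) * G = R * (D * (D * a - a * D) * D) * R := by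
      nth_rewrite 1 [eRD]
      rw [eDR]; simp only [mul_assoc]
    have h3 : algebraMap ℝ A m * (D * a - a * D) - D * (D * a - a * D) * D
        = D * a * X - X * (a * D) := by
      rw [eX, mul_add, ← eM (D * a)]
      noncomm_ring
    rw [h1, h2, ← sub_mul, ← mul_sub, h3, mul_sub, sub_mul]
    congr 1
    · rw [mul_assoc, mul_assoc _ X R, eXR, mul_one, ← mul_assoc, ← eRD]
    · rw [← mul_assoc R, eRX, one_mul, mul_assoc, ← eDR]
  set δ := D * a - a * D with hδ
  have e2 : B * (G * a - a * G) = m • (B * R * δ * R) - B * G * δ * G := by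
    rw [ident, mul_sub, mul_smul_comm]; simp only [mul_assoc]
  rw [e2]
  have b1 : ‖m • (B * R * δ * R)‖ ≤ m * (m ^ (σ / 2 - 1) * ‖δ‖ * m⁻¹) := by
    rw [norm_smul, Real.norm_of_nonneg hm.le]
    gcongr
    refine (norm_mul_le _ _).trans ?_
    gcongr
    refine (norm_mul_le _ _).trans ?_
    gcongr
  have b2 : ‖B * G * δ * G‖ ≤ m ^ ((σ + 1) / 2 - 1) * ‖δ‖ * m ^ (-(1 / 2) : ℝ) := by
    refine (norm_mul_le _ _).trans ?_
    gcongr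
    refine (norm_mul_le _ _).trans ?_
    gcongr
  have e3 : m * (m ^ (σ / 2 - 1) * ‖δ‖ * m⁻¹) = m ^ (σ / 2 - 1) * ‖δ‖ := by field_simp
  have e4 : m ^ ((σ + 1) / 2 - 1) * ‖δ‖ * m ^ (-(1 / 2) : ℝ) = m ^ (σ / 2 - 1) * ‖δ‖ := by
    rw [mul_right_comm, ← Real.rpow_add hm]; ring_nf
  refine (norm_sub_le _ _).trans ?_
  linarith

lemma aux_int (σ : ℝ) (hσ' : σ < 1) :
    MeasureTheory.Integrable (fun u : ℝ => (1 + u ^ 2) ^ (σ / 2 - 1)) := by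
  have := integrable_rpow_neg_one_add_norm_sq (E := ℝ) (μ := MeasureTheory.volume)
    (r := 2 - σ) (by simp; linarith)
  simp only [Real.norm_eq_abs, sq_abs] at this
  convert this using 3
  ring

lemma aux_val (σ : ℝ) (hσ' : σ < 1) :
    ∫ u : ℝ, (1 + u ^ 2) ^ (σ / 2 - 1) ≤ 2 * (1 + 1 / (1 - σ)) := by
  have hi := aux_int σ hσ'
  have h0 : ∫ u : ℝ, (1 + u ^ 2) ^ (σ / 2 - 1) =
      2 * ∫ u in Set.Ioi (0:ℝ), (1 + u ^ 2) ^ (σ / 2 - 1) := by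
    rw [← integral_comp_abs (f := fun u : ℝ => (1 + u ^ 2) ^ (σ / 2 - 1))]
    simp only [sq_abs]
  rw [h0]
  gcongr
  rw [← Set.Ioc_union_Ioi_eq_Ioi (zero_le_one (α := ℝ)),
    MeasureTheory.setIntegral_union (Set.Ioc_disjoint_Ioi le_rfl) measurableSet_Ioi
      hi.integrableOn hi.integrableOn]
  gcongr
  · calc _ ≤ ∫ u in Set.Ioc (0:ℝ) 1, (1:ℝ) := by
          refine MeasureTheory.setIntegral_mono_on hi.integrableOn (by simp) measurableSet_Ioc ?_
          intro u _
          exact Real.rpow_le_one_of_one_le_of_nonpos (by nlinarith [sq_nonneg u]) (by linarith)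
      _ = 1 := by simp
  · have h := integral_Ioi_rpow_of_lt (a := σ - 2) (by linarith) (one_pos)
    calc _ ≤ ∫ u in Set.Ioi (1:ℝ), u ^ (σ - 2) := by
          refine MeasureTheory.setIntegral_mono_on hi.integrableOn
            (integrableOn_Ioi_rpow_of_lt (by linarith) one_pos) measurableSet_Ioi ?_
          intro u hu
          have hu0 : (0:ℝ) < u := lt_trans one_pos hu
          have : u ^ (σ - 2) = (u ^ 2) ^ (σ / 2 - 1) := by
            rw [← Real.rpow_natCast, ← Real.rpow_mul hu0.le]
            congr 1; push_cast; ring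
          rw [this]
          exact Real.rpow_le_rpow_of_nonpos (by positivity) (by linarith) (by linarith)
      _ = 1 / (1 - σ) := by
          rw [h, Real.one_rpow, show σ - 2 + 1 = -(1 - σ) by ring, neg_div_neg_eq]

lemma aux_gamma (σ : ℝ) (hσ : 0 ≤ σ) (hσ' : σ < 1) :
    2 / (1 - σ) ≤ 2 * √π * Gamma ((1 - σ) / 2) / Gamma ((2 - σ) / 2) := by
  set y := (1 - σ) / 2 with hy
  have hy0 : 0 < y := by simp only [hy]; linarith
  have hy1 : y ≤ 1 / 2 := by simp only [hy]; linarith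
  have e : (2 - σ) / 2 = y + 1 / 2 := by simp only [hy]; ring
  rw [e]
  have h1 : Gamma (y + 1 / 2) ≤ √π := by
    rw [← Real.Gamma_one_half_eq]
    exact Real.Gamma_strictAntiOn_Ioc.antitoneOn (by constructor <;> norm_num)
      (by constructor <;> linarith) (by linarith)
  have hp : 0 < Gamma (y + 1 / 2) := Real.Gamma_pos_of_pos (by linarith)
  have h3 : Gamma (3 - y) ≤ 2 := by
    have : Gamma 3 = 2 := by
      rw [show (3:ℝ) = 2 + 1 by norm_num, Real.Gamma_add_one (by norm_num), Real.Gamma_two]; norm_num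
    rw [← this]
    exact Real.Gamma_strictMonoOn_Ici.monotoneOn (by simp; linarith) (by norm_num) (by linarith)
  have h3p : 0 < Gamma (3 - y) := Real.Gamma_pos_of_pos (by linarith)
  have hyp : 0 < Gamma (y + 1) := Real.Gamma_pos_of_pos (by linarith)
  have h2 : 1 / 2 ≤ Gamma (y + 1) := by
    have := Real.Gamma_mul_add_mul_le_rpow_Gamma_mul_rpow_Gamma (s := y + 1) (t := 3 - y)
      (a := 1 / 2) (b := 1 / 2) (by linarith) (by linarith) (by norm_num) (by norm_num) (by norm_num)
    rw [show 1 / 2 * (y + 1) + 1 / 2 * (3 - y) = 2 by ring, Real.Gamma_two,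
      ← Real.mul_rpow hyp.le h3p.le, ← Real.sqrt_eq_rpow, Real.one_le_sqrt] at this
    nlinarith
  rw [Real.Gamma_add_one hy0.ne'] at h2
  have hg : 1 / (2 * y) ≤ Gamma y := by
    rw [div_le_iff₀ (by positivity)]; linarith
  rw [le_div_iff₀ hp]
  have e5 : 2 / (1 - σ) = 1 / y := by simp only [hy]; field_simp
  rw [e5]
  calc 1 / y * Gamma (y + 1 / 2) ≤ 1 / y * √π := by gcongr
    _ = 2 * √π * (1 / (2 * y)) := by field_simp
    _ ≤ _ := by gcongr

lemma aux_Ft (t : ℝ) (ht : 0 < t) (x : ℝ) :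
    x / t * (1 + x ^ 2 / t ^ 2) ^ (-(1 : ℝ) / 2) =
      t / π * ∫ u : ℝ, x * (t ^ 2 * (1 + u ^ 2) + x ^ 2)⁻¹ := by
  have hc : 0 < t ^ 2 + x ^ 2 := by positivity
  set k := √(t ^ 2 + x ^ 2) / t with hk
  have hk0 : 0 < k := by positivity
  have hk2 : k ^ 2 = (t ^ 2 + x ^ 2) / t ^ 2 := by
    rw [hk, div_pow, Real.sq_sqrt hc.le]
  have e1 : ∀ u : ℝ, x * (t ^ 2 * (1 + u ^ 2) + x ^ 2)⁻¹
      = x * (t ^ 2 + x ^ 2)⁻¹ * (1 + (u / k) ^ 2)⁻¹ := by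
    intro u
    rw [div_pow, hk2, mul_assoc, ← mul_inv]
    congr 2
    field_simp
    ring
  simp_rw [e1]
  rw [MeasureTheory.integral_const_mul,
    MeasureTheory.Measure.integral_comp_div (fun u : ℝ => (1 + u ^ 2)⁻¹) k,
    integral_univ_inv_one_add_sq, abs_of_pos hk0]
  have e2 : (1 + x ^ 2 / t ^ 2) ^ (-(1 : ℝ) / 2) = k⁻¹ := by
    rw [show 1 + x ^ 2 / t ^ 2 = k ^ 2 by rw [hk2]; field_simp, ← Real.rpow_natCast,
      ← Real.rpow_mul hk0.le, ← Real.rpow_neg_one]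
    norm_num
  rw [e2]
  have : t ^ 2 + x ^ 2 = k ^ 2 * t ^ 2 := by rw [hk2]; field_simp
  rw [this]
  have := Real.pi_pos
  simp only [smul_eq_mul]
  field_simp

lemma aux_main {A : Type*} [CStarAlgebra A] (D a : A) (hD : IsSelfAdjoint D)
    (t : ℝ) (ht : 1 ≤ t) (σ : ℝ) (hσ : 0 ≤ σ) (hσ' : σ < 1) :
    ‖cfc (fun x : ℝ => |x| ^ σ) D *
      (cfc (fun x : ℝ => x / t * (1 + x ^ 2 / t ^ 2) ^ (-(1 : ℝ) / 2)) D * a -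
       a * cfc (fun x : ℝ => x / t * (1 + x ^ 2 / t ^ 2) ^ (-(1 : ℝ) / 2)) D)‖ ≤
      (1 + 2 * Real.sqrt π * Real.Gamma ((1 - σ) / 2) / Real.Gamma ((2 - σ) / 2)) *
        t ^ (σ - 1) * ‖D * a - a * D‖ := by
  have ht0 : 0 < t := by linarith
  have hpi := Real.pi_pos
  set f : ℝ → ℝ → ℝ := fun u x => x * (t ^ 2 * (1 + u ^ 2) + x ^ 2)⁻¹ with hf
  have hne : ∀ p : ℝ × ℝ, t ^ 2 * (1 + p.1 ^ 2) + p.2 ^ 2 ≠ 0 := fun p => by positivity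
  have cf : Continuous (Function.uncurry f) := by
    simp only [hf, Function.uncurry_def]
    fun_prop (disch := assumption)
  obtain ⟨M, hM⟩ : ∃ M : ℝ, ∀ z ∈ spectrum ℝ D, ‖z‖ ≤ M :=
    (spectrum.isCompact (𝕜 := ℝ) D).isBounded.exists_norm_le
  have bge : ∀ u : ℝ, ∀ z ∈ spectrum ℝ D, ‖f u z‖ ≤ M * (1 + u ^ 2)⁻¹ := by
    intro u z hz
    have h1 := hM z hz
    simp only [hf]
    rw [norm_mul, Real.norm_of_nonneg (r := (_)⁻¹) (by positivity)]
    have hM0 : 0 ≤ M := (norm_nonneg _).trans h1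
    refine mul_le_mul h1 (inv_anti₀ (by positivity) ?_) (by positivity) hM0
    nlinarith [sq_nonneg u, sq_nonneg z, mul_nonneg (by nlinarith : 0 ≤ t ^ 2 - 1) (by positivity : 0 ≤ 1 + u ^ 2)]
  have bint : MeasureTheory.Integrable (fun u : ℝ => M * (1 + u ^ 2)⁻¹) :=
    integrable_inv_one_add_sq.const_mul M
  have hI : MeasureTheory.Integrable (fun u : ℝ => cfc (f u) D) :=
    integrable_cfc f (fun u => M * (1 + u ^ 2)⁻¹) D cf.continuousOn (.of_forall bge) bint.2 hD
  have hE := cfc_integral (μ := MeasureTheory.volume) f (fun u => M * (1 + u ^ 2)⁻¹) D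
    cf.continuousOn (.of_forall bge) bint.2 hD
  have eF : cfc (fun x : ℝ => x / t * (1 + x ^ 2 / t ^ 2) ^ (-(1 : ℝ) / 2)) D
      = (t / π) • ∫ u : ℝ, cfc (f u) D := by
    have c1 : Continuous fun x : ℝ => x / t * (1 + x ^ 2 / t ^ 2) ^ (-(1 : ℝ) / 2) := by
      refine (continuous_id.div_const t).mul (Continuous.rpow_const (by fun_prop) ?_)
      intro x; left; positivity
    have : (fun r : ℝ => ∫ u : ℝ, f u r) =
        fun x => (t / π)⁻¹ • (x / t * (1 + x ^ 2 / t ^ 2) ^ (-(1 : ℝ) / 2)) := by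
      funext x
      rw [aux_Ft t ht0 x, smul_eq_mul, inv_mul_cancel_left₀ (by positivity)]
    rw [← hE, this, cfc_smul _ _ D c1.continuousOn, smul_inv_smul₀ (by positivity)]
  set B := cfc (fun x : ℝ => |x| ^ σ) D with hB
  have eC : B * ((t / π) • (∫ u : ℝ, cfc (f u) D) * a - a * (t / π) • ∫ u : ℝ, cfc (f u) D)
      = (t / π) • ∫ u : ℝ, B * (cfc (f u) D * a - a * cfc (f u) D) := by
    have hsub : MeasureTheory.Integrable (fun u : ℝ => cfc (f u) D * a - a * cfc (f u) D) :=
      (hI.mul_const a).sub (hI.const_mul a)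
    rw [integral_const_mul_of_integrable hsub,
      MeasureTheory.integral_sub (hI.mul_const a) (hI.const_mul a),
      integral_const_mul_of_integrable hI,
      integral_mul_const_of_integrable hI,
      smul_mul_assoc, mul_smul_comm, ← smul_sub, mul_smul_comm]
  rw [eF, eC, norm_smul, Real.norm_of_nonneg (by positivity)]
  set N := ‖D * a - a * D‖ with hN
  have hN0 : 0 ≤ N := norm_nonneg _
  have hb : ‖∫ u : ℝ, B * (cfc (f u) D * a - a * cfc (f u) D)‖ ≤
      ∫ u : ℝ, 2 * t ^ (σ - 2) * N * (1 + u ^ 2) ^ (σ / 2 - 1) := by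
    refine MeasureTheory.norm_integral_le_of_norm_le ((aux_int σ hσ').const_mul _) (.of_forall ?_)
    intro u
    have := aux_key D a hD σ hσ hσ' (t ^ 2 * (1 + u ^ 2)) (by positivity)
    refine this.trans (le_of_eq ?_)
    rw [Real.mul_rpow (by positivity) (by positivity), ← Real.rpow_natCast t 2,
      ← Real.rpow_mul ht0.le, show ((2:ℕ):ℝ) * (σ / 2 - 1) = σ - 2 by push_cast; ring]
    ring
  rw [MeasureTheory.integral_const_mul] at hb
  have hv := aux_val σ hσ'
  have hg := aux_gamma σ hσ hσ'
  set g := 2 * √π * Gamma ((1 - σ) / 2) / Gamma ((2 - σ) / 2)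
  set J := ∫ u : ℝ, (1 + u ^ 2) ^ (σ / 2 - 1)
  have ets : t * t ^ (σ - 2) = t ^ (σ - 1) := by
    rw [show σ - 1 = 1 + (σ - 2) by ring, Real.rpow_add ht0, Real.rpow_one]
  calc t / π * _ ≤ t / π * (2 * t ^ (σ - 2) * N * J) := by gcongr
    _ = (2 / π * J) * (t * t ^ (σ - 2)) * N := by ring
    _ ≤ (1 + g) * (t * t ^ (σ - 2)) * N := by
      gcongr
      have hw : 1 ≤ 1 / (1 - σ) := by rw [le_div_iff₀ (by linarith)]; linarith
      have e : 2 / (1 - σ) = 2 * (1 / (1 - σ)) := by ring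
      rw [e] at hg
      rw [div_mul_eq_mul_div, div_le_iff₀ hpi]
      nlinarith [Real.pi_gt_three]
    _ = _ := by rw [ets]

/-- Let `D` be a self-adjoint element of a unital C*-algebra `A`, `a ∈ A`,
`t ≥ 1` and `0 ≤ σ < 1`.  With `F_t := (·/t)(1 + ·²/t²)^{−1/2}(D)` and `|D|^σ := |·|^σ(D)`
given by the continuous functional calculus, one has
`‖|D|^σ [F_t, a]‖ ≤ C_σ t^{σ−1} ‖[D, a]‖` where
`C_σ := 1 + 2√π Γ((1−σ)/2)/Γ((2−σ)/2)`; in particular (the case `σ = 0`)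
`‖[F_t, a]‖ ≤ (1 + 2π) t⁻¹ ‖[D, a]‖`. -/
theorem commutator_Ds_Ft {A : Type*} [CStarAlgebra A] (D a : A) (hD : IsSelfAdjoint D)
    (t : ℝ) (ht : 1 ≤ t) (σ : ℝ) (hσ : 0 ≤ σ) (hσ' : σ < 1) :
    let Ft := cfc (fun x : ℝ => x / t * (1 + x ^ 2 / t ^ 2) ^ (-(1 : ℝ) / 2)) D
    let absDσ := cfc (fun x : ℝ => |x| ^ σ) D
    ‖absDσ * (Ft * a - a * Ft)‖ ≤
      (1 + 2 * Real.sqrt π * Real.Gamma ((1 - σ) / 2) / Real.Gamma ((2 - σ) / 2)) *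
        t ^ (σ - 1) * ‖D * a - a * D‖ ∧
    ‖Ft * a - a * Ft‖ ≤ (1 + 2 * π) * t⁻¹ * ‖D * a - a * D‖ := by
  intro Ft absDσ
  refine ⟨aux_main D a hD t ht σ hσ hσ', ?_⟩
  have h := aux_main D a hD t ht 0 le_rfl one_pos
  have e1 : cfc (fun x : ℝ => |x| ^ (0:ℝ)) D = 1 := by
    simp only [Real.rpow_zero]
    exact cfc_const_one ℝ D
  have e2 : 2 * √π * Gamma ((1 - 0) / 2) / Gamma ((2 - 0) / 2) = 2 * π := by
    rw [sub_zero, sub_zero, Real.Gamma_one_half_eq, div_self two_ne_zero, Real.Gamma_one, div_one,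
      mul_assoc, Real.mul_self_sqrt Real.pi_pos.le]
  rw [e1, one_mul, e2, zero_sub, Real.rpow_neg_one] at h
  exact h
end
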